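/- For every n-braid β, the Lawrence–Krammer matrices K(β) and K(β^rev) have the same characteristic polynomial. -/

import Mathlib

open Matrix

noncomputable section

/-- Braid relations among the Artin generators `σ_1, …, σ_{n-1}`
(indexed here by `Fin (n-1)`, with `i : Fin (n-1)` standing for `σ_{i+1}`). -/
def braidRels (n : ℕ) : Set (FreeGroup (Fin (n - 1))) :=
  {r | (∃ i j : Fin (n - 1), (i : ℕ) + 1 = (j : ℕ) ∧
          r = .of i * .of j * .of i * (.of j * .of i * .of j)⁻¹) ∨
       (∃ i j : Fin (n - 1), (i : ℕ) + 2 ≤ (j : ℕ) ∧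
          r = .of i * .of j * (.of j * .of i)⁻¹)}

/-- The braid group `B_n` as a presented group. -/
abbrev Braid (n : ℕ) := PresentedGroup (braidRels n)

/-- The Artin generator `σ_{i+1}` of `B_n`. -/
def σg {n : ℕ} (i : Fin (n - 1)) : Braid n := PresentedGroup.of i

/-- Index set `{(i,j) : 1 ≤ i < j ≤ n}` for the Lawrence–Krammer basis `X_{i,j}`. -/
abbrev BP (n : ℕ) := {p : Fin (n + 1) × Fin (n + 1) // 0 < (p.1 : ℕ) ∧ (p.1 : ℕ) < (p.2 : ℕ)}

/-- The standard basis row vector `X_{a,b}`. -/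
def ee {R : Type*} [CommRing R] (n a b : ℕ) : BP n → R :=
  fun c => if (c.val.1 : ℕ) = a ∧ (c.val.2 : ℕ) = b then 1 else 0

/-- The Lawrence–Krammer matrix of the Artin generator `σ_m` (1-based `m`),
with parameters `t`, `q`; row `(i,j)` is the expansion of `X_{i,j}·σ_m` in the basis. -/
def LKgen {R : Type*} [CommRing R] (t q : R) (n m : ℕ) : Matrix (BP n) (BP n) R :=
  fun r c =>
    let i := (r.val.1 : ℕ); let j := (r.val.2 : ℕ)
    if m = i ∧ j = i + 1 then -(t * q ^ 2) * ee n i j c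
    else if m = i then
      q * ee n (i + 1) j c + (1 - q) * ee n i j c + t * q * (1 - q) * ee n i (i + 1) c
    else if m = j then
      q * ee n i (j + 1) c + (1 - q) * ee n i j c - q * (1 - q) * ee n j (j + 1) c
    else if m + 1 = i then ee n (i - 1) j c
    else if m + 1 = j then ee n i (j - 1) c
    else ee n i j c

/-- The field `ℚ(t,q)` of rational functions in two variables. -/
abbrev F2 := FractionRing (MvPolynomial (Fin 2) ℚ)

/-- The variable `t` in `ℚ(t,q)`. -/
def tt : F2 := algebraMap (MvPolynomial (Fin 2) ℚ) F2 (MvPolynomial.X 0)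

/-- The variable `q` in `ℚ(t,q)`. -/
def qq : F2 := algebraMap (MvPolynomial (Fin 2) ℚ) F2 (MvPolynomial.X 1)

section ReversalForm

variable {R : Type*} [CommRing R]

/-- The row vectors `t • e_i - e_j`, indexed by the pairs `(i, j)`. -/
def lkEdge (t : R) (n : ℕ) : Matrix (BP n) (Fin (n + 1)) R :=
  of fun r a => t * (if r.val.1 = a then 1 else 0) - (if r.val.2 = a then 1 else 0)

/-- The diagonal matrix with entry `q ^ (n - i) * q ^ (n - j)` at `(i, j)`. -/
def lkWeight (q : R) (n : ℕ) : Matrix (BP n) (BP n) R :=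
  diagonal fun r => q ^ (n - (r.val.1 : ℕ)) * q ^ (n - (r.val.2 : ℕ))

/-- The diagonal matrix with entries `q ^ (n - a) * q ^ (n - a)`. -/
def vertexWeight (q : R) (n : ℕ) : Matrix (Fin (n + 1)) (Fin (n + 1)) R :=
  diagonal fun a => q ^ (n - (a : ℕ)) * q ^ (n - (a : ℕ))

/-- The symmetric matrix that intertwines the Lawrence–Krammer matrices of the generators
with their transposes. -/
def lkForm (t q : R) (n : ℕ) : Matrix (BP n) (BP n) R :=
  ((t * q + 1) * (t - 1)) • lkWeight q n +
    (q - 1) • (lkEdge t n * vertexWeight q n * (lkEdge t n)ᵀ)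

/-- A Burau-type matrix describing the action of `σ_m` on the row vectors `e_a`. -/
def vertexGen (t q : R) (n m : ℕ) : Matrix (Fin (n + 1)) (Fin (n + 1)) R :=
  of fun a b =>
    if (a : ℕ) = m then
      (if (b : ℕ) = m then (1 - q) * (1 + t * q) else if (b : ℕ) = m + 1 then q ^ 2 else 0)
    else if (a : ℕ) = m + 1 then (if (b : ℕ) = m then 1 else 0)
    else if a = b then 1 else 0

/-- The matrix unit with row `(m, m + 1)` and column `m`. -/
def edgeUnit (R : Type*) [CommRing R] (n m : ℕ) : Matrix (BP n) (Fin (n + 1)) R :=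
  of fun r a =>
    if (r.val.1 : ℕ) = m ∧ (r.val.2 : ℕ) = m + 1 ∧ (a : ℕ) = m then 1 else 0

lemma sum_ee_mul (n a b : ℕ) (ha : 0 < a) (hab : a < b) (hb : b ≤ n) (f : ℕ → ℕ → R) :
    ∑ c : BP n, ee n a b c * f c.val.1 c.val.2 = f a b := by
  rw [Finset.sum_eq_single ⟨(⟨a, by omega⟩, ⟨b, by omega⟩), ha, hab⟩]
  · simp [ee]
  · intro c _ hc
    have : ¬ ((c.val.1 : ℕ) = a ∧ (c.val.2 : ℕ) = b) := fun h =>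
      hc (Subtype.ext (Prod.ext (Fin.ext h.1) (Fin.ext h.2)))
    simp [ee, this]
  · simp

lemma LKgen_mul_lkEdge (t q : R) (n m : ℕ) (hm : 0 < m) (hmn : m + 1 ≤ n) :
    LKgen t q n m * lkEdge t n =
      lkEdge t n * vertexGen t q n m - ((t * q + 1) * (t - 1)) • edgeUnit R n m := by
  ext r a
  have hee : ∀ x y : ℕ, 0 < x → x < y → y ≤ n → ∑ c : BP n, ee n x y c * lkEdge t n c a =
      t * (if x = (a : ℕ) then 1 else 0) - (if y = (a : ℕ) then 1 else 0) := by
    intro x y hx hxy hy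
    rw [← sum_ee_mul n x y hx hxy hy
      (fun x y => t * (if x = (a : ℕ) then 1 else 0) - (if y = (a : ℕ) then 1 else 0))]
    simp [lkEdge, Fin.ext_iff]
  have hright : (lkEdge t n * vertexGen t q n m) r a =
      t * vertexGen t q n m r.val.1 a - vertexGen t q n m r.val.2 a := by
    simp [mul_apply, lkEdge, sub_mul, Finset.sum_sub_distrib]
  rw [Matrix.sub_apply, hright, mul_apply]
  obtain ⟨⟨⟨i, hi⟩, ⟨j, hj⟩⟩, h0, hij⟩ := r
  obtain ⟨a, ha⟩ := a
  simp only [LKgen, vertexGen, edgeUnit, of_apply, Matrix.smul_apply, smul_eq_mul, Fin.mk.injEq]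
    at h0 hij hee ⊢
  by_cases h₁ : m = i ∧ j = i + 1
  · simp only [if_pos h₁, mul_assoc, ← Finset.mul_sum]
    rw [hee _ _ h0 hij (by omega)]
    clear hee hright
    grind
  by_cases h₂ : m = i
  · simp only [if_neg h₁, if_pos h₂, add_mul, mul_assoc, Finset.sum_add_distrib, ← Finset.mul_sum]
    rw [hee _ _ h0 hij (by omega), hee (i + 1) j (by omega) (by omega) (by omega),
      hee i (i + 1) h0 (by omega) (by omega)]
    clear hee hright
    grind
  by_cases h₃ : m = j
  · simp only [if_neg h₁, if_neg h₂, if_pos h₃, add_mul, sub_mul (_ + _), mul_assoc,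
      Finset.sum_add_distrib, Finset.sum_sub_distrib, ← Finset.mul_sum]
    rw [hee _ _ h0 hij (by omega), hee i (j + 1) (by omega) (by omega) (by omega),
      hee j (j + 1) (by omega) (by omega) (by omega)]
    clear hee hright
    grind
  by_cases h₄ : m + 1 = i
  · simp only [if_neg h₁, if_neg h₂, if_neg h₃, if_pos h₄]
    rw [hee _ _ (by omega) (by omega) (by omega)]
    clear hee hright
    grind
  by_cases h₅ : m + 1 = j
  · simp only [if_neg h₁, if_neg h₂, if_neg h₃, if_neg h₄, if_pos h₅]
    rw [hee _ _ (by omega) (by omega) (by omega)]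
    clear hee hright
    grind
  · simp only [if_neg h₁, if_neg h₂, if_neg h₃, if_neg h₄, if_neg h₅]
    rw [hee _ _ h0 hij (by omega)]
    clear hee hright
    grind

lemma isSymm_vertexGen_mul_vertexWeight (t q : R) (n m : ℕ) (hmn : m + 1 ≤ n) :
    (vertexGen t q n m * vertexWeight q n).IsSymm := by
  obtain ⟨k, rfl⟩ := Nat.exists_eq_add_of_le hmn
  ext a b
  have h1 : m + 1 + k - m = k + 1 := by omega
  have h2 : m + 1 + k - (m + 1) = k := by omega
  simp only [vertexWeight, transpose_apply, mul_diagonal, vertexGen, of_apply]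
  grind

lemma isSymm_LKgen_mul_lkWeight_sub (t q : R) (n m : ℕ) (hm : 0 < m) (hmn : m + 1 ≤ n) :
    (LKgen t q n m * lkWeight q n -
      (q - 1) • (edgeUnit R n m * vertexWeight q n * (lkEdge t n)ᵀ)).IsSymm := by
  have hz : q ^ (n - m) = q * q ^ (n - (m + 1)) := by
    rw [← pow_succ']
    congr 1
    omega
  have hunit (r c : BP n) :
      (edgeUnit R n m * vertexWeight q n * (lkEdge t n)ᵀ) r c =
      if (r.val.1 : ℕ) = m ∧ (r.val.2 : ℕ) = m + 1 then q ^ (n - m) * q ^ (n - m) *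
        (t * (if (c.val.1 : ℕ) = m then 1 else 0) - (if (c.val.2 : ℕ) = m then 1 else 0))
      else 0 := by
    rw [mul_apply, Finset.sum_eq_single ⟨m, by omega⟩]
    · simp [vertexWeight, edgeUnit, lkEdge, Fin.ext_iff]
    · intro b _ hb
      have : (b : ℕ) ≠ m := fun h => hb (Fin.ext h)
      simp [vertexWeight, edgeUnit, this]
    · simp
  ext r c
  simp only [transpose_apply, Matrix.sub_apply, Matrix.smul_apply, smul_eq_mul, hunit, lkWeight,
    mul_diagonal]
  clear hunit
  obtain ⟨⟨⟨i, hi⟩, ⟨j, hj⟩⟩, h0, hij⟩ := r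
  obtain ⟨⟨⟨i', hi'⟩, ⟨j', hj'⟩⟩, h0', hij'⟩ := c
  simp only [LKgen, ee] at h0 hij h0' hij' ⊢
  generalize hZ : (fun a => q ^ (n - a)) = z
  have hZ' (a : ℕ) : q ^ (n - a) = z a := congrFun hZ a
  simp only [hZ'] at hz ⊢
  clear hZ hZ'
  by_cases h₁ : m = i ∧ j = i + 1
  · grind
  by_cases h₂ : m = i
  · grind
  by_cases h₃ : m = j
  · grind
  by_cases h₄ : m + 1 = i
  · grind
  by_cases h₅ : m + 1 = j
  · grind
  · grind

lemma lkForm_isSymm (t q : R) (n : ℕ) : (lkForm t q n).IsSymm := by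
  simp [lkForm, IsSymm, lkWeight, vertexWeight, Matrix.mul_assoc]

lemma LKgen_mul_lkForm (t q : R) (n m : ℕ) (hm : 0 < m) (hmn : m + 1 ≤ n) :
    LKgen t q n m * lkForm t q n = lkForm t q n * (LKgen t q n m)ᵀ := by
  have hsymm : (LKgen t q n m * lkForm t q n).IsSymm := by
    have heq : LKgen t q n m * lkForm t q n =
        ((t * q + 1) * (t - 1)) • (LKgen t q n m * lkWeight q n -
          (q - 1) • (edgeUnit R n m * vertexWeight q n * (lkEdge t n)ᵀ)) +
        (q - 1) • (lkEdge t n * (vertexGen t q n m * vertexWeight q n) * (lkEdge t n)ᵀ) := by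
      simp only [lkForm, Matrix.mul_add, Matrix.mul_smul, ← Matrix.mul_assoc,
        LKgen_mul_lkEdge t q n m hm hmn, Matrix.sub_mul, Matrix.smul_mul, smul_sub, smul_smul]
      rw [mul_comm (q - 1)]
      abel
    rw [heq]
    refine ((isSymm_LKgen_mul_lkWeight_sub t q n m hm hmn).smul _).add (IsSymm.smul ?_ _)
    have h := isSymm_vertexGen_mul_vertexWeight t q n m hmn
    rw [IsSymm, transpose_mul, transpose_mul, transpose_transpose, h.eq, ← Matrix.mul_assoc]
  rw [← hsymm.eq, transpose_mul, (lkForm_isSymm t q n).eq]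

lemma map_lkForm {S : Type*} [CommRing S] (f : R →+* S) (t q : R) (n : ℕ) :
    (lkForm t q n).map f = lkForm (f t) (f q) n := by
  ext r c
  simp [lkForm, lkEdge, lkWeight, vertexWeight, mul_apply, diagonal_apply, apply_ite f]

lemma lkForm_one (t : R) (n : ℕ) :
    lkForm t 1 n = ((t + 1) * (t - 1)) • (1 : Matrix (BP n) (BP n) R) := by
  simp [lkForm, lkWeight]

end ReversalForm

lemma lkForm_det_ne_zero (n : ℕ) : (lkForm tt qq n).det ≠ 0 := by
  rw [tt, qq, ← map_lkForm, ← RingHom.mapMatrix_apply, ← RingHom.map_det]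
  refine (map_ne_zero_iff _ (IsFractionRing.injective (MvPolynomial (Fin 2) ℚ) F2)).mpr ?_
  intro h
  have h' := congrArg (MvPolynomial.eval ![2, 1]) h
  rw [RingHom.map_det, RingHom.mapMatrix_apply, map_lkForm] at h'
  norm_num [lkForm_one] at h'

/-- For every braid `β`, the Lawrence–Krammer matrices `K(β)` and
`K(β^rev)` have the same characteristic polynomial, where `β ↦ β^rev` is the
anti-automorphism fixing each Artin generator. -/
theorem lk_reverse_charpoly (n : ℕ) (K : Braid n →* GL (BP n) F2)
    (hK : ∀ m : Fin (n - 1),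
      (K (σg m) : Matrix (BP n) (BP n) F2) = LKgen tt qq n ((m : ℕ) + 1))
    (rev : Braid n →* (Braid n)ᵐᵒᵖ)
    (hrev : ∀ i : Fin (n - 1), rev (σg i) = MulOpposite.op (σg i))
    (β : Braid n) :
    (K β : Matrix (BP n) (BP n) F2).charpoly =
      (K (rev β).unop : Matrix (BP n) (BP n) F2).charpoly := by
  set V := lkForm tt qq n
  have hV : IsUnit V := (isUnit_iff_isUnit_det V).mpr (lkForm_det_ne_zero n).isUnit
  have key : (K (rev β).unop : Matrix (BP n) (BP n) F2) * V = V * (K β).valᵀ := by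
    have hβ : β ∈ Subgroup.closure (Set.range (PresentedGroup.of (rels := braidRels n))) := by
      rw [PresentedGroup.closure_range_of]; trivial
    induction hβ using Subgroup.closure_induction with
    | mem x hx =>
      obtain ⟨m, rfl⟩ := hx
      change (K (rev (σg m)).unop).val * V = V * (K (σg m)).valᵀ
      rw [hrev, MulOpposite.unop_op, hK]
      exact LKgen_mul_lkForm tt qq n _ (by omega) (by omega)
    | one => simp
    | mul x y _ _ hx hy =>
      rw [map_mul, MulOpposite.unop_mul, map_mul, map_mul, Units.val_mul, Units.val_mul,
        transpose_mul, Matrix.mul_assoc, hx, ← Matrix.mul_assoc, hy, Matrix.mul_assoc]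
    | inv x _ hx =>
      rw [map_inv, MulOpposite.unop_inv, map_inv, map_inv, Units.inv_mul_eq_iff_eq_mul,
        ← Matrix.mul_assoc, hx, Matrix.mul_assoc, ← transpose_mul]
      simp
  obtain ⟨U, hU⟩ := hV
  rw [← hU] at key
  rw [Units.eq_mul_inv_iff_mul_eq U |>.mpr key, ← charpoly_transpose,
    coe_units_inv, charpoly_units_conj]
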